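/- Let A be a Hopf algebra over a field k with bijective antipode, let P ∈ A be a right group-like projection, let N_P be the associated left coideal subalgebra and V_P ⊆ N_P the smallest left coideal containing P. Then V_P = N_P if and only if N_P is quasi-Frobenius, i.e. N_P is injective as a left module over itself. -/

import Mathlib

open scoped TensorProduct

noncomputable section

variable (k : Type*) [Field k] {A : Type*} [Ring A] [HopfAlgebra k A]

/-- `P` is a right group-like projection: a nonzero idempotent with
`Δ(P)(1 ⊗ P) = P ⊗ P = (1 ⊗ P)Δ(P)`. -/
def IsRightGroupLikeProjection (P : A) : Prop :=
  P ≠ 0 ∧ P * P = P ∧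
    Coalgebra.comul (R := k) P * ((1 : A) ⊗ₜ[k] P) = P ⊗ₜ[k] P ∧
    ((1 : A) ⊗ₜ[k] P) * Coalgebra.comul (R := k) P = P ⊗ₜ[k] P

/-- `P` is a left group-like projection: a nonzero idempotent with
`Δ(P)(P ⊗ 1) = P ⊗ P = (P ⊗ 1)Δ(P)`. -/
def IsLeftGroupLikeProjection (P : A) : Prop :=
  P ≠ 0 ∧ P * P = P ∧
    Coalgebra.comul (R := k) P * (P ⊗ₜ[k] (1 : A)) = P ⊗ₜ[k] P ∧
    (P ⊗ₜ[k] (1 : A)) * Coalgebra.comul (R := k) P = P ⊗ₜ[k] P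

/-- A two-sided group-like projection. -/
def IsTwoSidedGroupLikeProjection (P : A) : Prop :=
  IsRightGroupLikeProjection k P ∧ IsLeftGroupLikeProjection k P

/-- `N_P^l = {x : (1 ⊗ P)Δ(x) = x ⊗ P}`. -/
def NPlSet (P : A) : Set A :=
  {x : A | ((1 : A) ⊗ₜ[k] P) * Coalgebra.comul (R := k) x = x ⊗ₜ[k] P}

/-- `N_P^r = {x : Δ(x)(1 ⊗ P) = x ⊗ P}`. -/
def NPrSet (P : A) : Set A :=
  {x : A | Coalgebra.comul (R := k) x * ((1 : A) ⊗ₜ[k] P) = x ⊗ₜ[k] P}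

/-- `N_P = N_P^l ∩ N_P^r`. -/
def NPSet (P : A) : Set A := NPlSet k P ∩ NPrSet k P

/-- `V_P = {(μ ⊗ id)(Δ(P)) : μ ∈ A*}`, the smallest left coideal containing `P`. -/
def VPSet (P : A) : Set A :=
  {x : A | ∃ μ : A →ₗ[k] k,
    x = TensorProduct.lid k A ((TensorProduct.map μ LinearMap.id) (Coalgebra.comul (R := k) P))}

/-- A submodule `N ⊆ A` is a left coideal if `Δ(N) ⊆ A ⊗ N`. -/
def IsLeftCoideal (N : Submodule k A) : Prop :=
  ∀ x ∈ N, Coalgebra.comul (R := k) x ∈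
    LinearMap.range (TensorProduct.map (LinearMap.id : A →ₗ[k] A) N.subtype)

/-- A subalgebra `N ⊆ A` is a left coideal subalgebra if `Δ(N) ⊆ A ⊗ N`. -/
def IsLeftCoidealSubalgebra (N : Subalgebra k A) : Prop :=
  IsLeftCoideal k (Subalgebra.toSubmodule N)

/-!
For `x ∈ N_P` the two identities `P₁ ⊗ x P₂ = S(x) P₁ ⊗ P₂` and
`S(P₁) ⊗ P₂ x = x S(P₁) ⊗ P₂` move `x` between the legs of `Δ(P)`. They drive both implications,
each of which passes through the condition `1 ∈ V_P`.

By the second identity and `ε(P) = 1`, a `k`-linear extension `F` of an `N_P`-linear map into an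
`A`-module averages to the `N_P`-linear extension `y ↦ S(P₁) F(P₂ y)`, so every `A`-module is
injective over `N_P`. If `1 = μ(P₁) P₂`, then by the first identity `a ↦ μ(S(a) P₁) P₂` is an
`N_P`-linear retraction of `A` onto `N_P`, which is therefore injective.

Conversely, by the first identity an `x ∈ N_P` with `x V_P = 0` satisfies `S(x) = 0`, so `N_P`
embeds in a power of itself through right multiplication by generators `bᵢ` of `V_P`. Injectivity
provides a retraction, that is, `cᵢ ∈ N_P` with `∑ bᵢ cᵢ = 1`. By the second identity `V_P` is
stable under right multiplication by `N_P`, so `1 ∈ V_P`, and then `N_P = 1 · N_P ⊆ V_P`.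
-/

section Slice

variable {R M N N' : Type*} [CommSemiring R] [AddCommMonoid M] [Module R M]
  [AddCommMonoid N] [Module R N] [AddCommMonoid N'] [Module R N']

/-- The slice map `μ ⊗ id : M ⊗ N → R ⊗ N ≃ N` in the first tensor factor. -/
def leftSlice (μ : M →ₗ[R] R) : M ⊗[R] N →ₗ[R] N :=
  (TensorProduct.lid R N).toLinearMap ∘ₗ μ.rTensor N

@[simp]
theorem leftSlice_tmul (μ : M →ₗ[R] R) (m : M) (n : N) : leftSlice μ (m ⊗ₜ[R] n) = μ m • n := by
  simp [leftSlice]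

theorem leftSlice_lTensor (μ : M →ₗ[R] R) (f : N →ₗ[R] N') (t : M ⊗[R] N) :
    leftSlice μ (f.lTensor M t) = f (leftSlice μ t) := by
  induction t with
  | zero => simp
  | add u v hu hv => simp only [map_add, hu, hv]
  | tmul m n => simp

theorem leftSlice_comp (μ : M →ₗ[R] R) (f : N' →ₗ[R] M) (t : N' ⊗[R] N) :
    leftSlice (μ ∘ₗ f) t = leftSlice μ (f.rTensor N t) := by
  simp [leftSlice, LinearMap.rTensor_comp_apply]

theorem leftSlice_assoc (μ : M →ₗ[R] R) (t : (M ⊗[R] N) ⊗[R] N') :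
    leftSlice μ (TensorProduct.assoc R M N N' t) = (leftSlice μ).rTensor N' t := by
  suffices leftSlice μ ∘ₗ (TensorProduct.assoc R M N N').toLinearMap = (leftSlice μ).rTensor N' from
    LinearMap.congr_fun this t
  ext m n n'
  simp [TensorProduct.smul_tmul']

theorem mem_range_lTensor_subtype_of_leftSlice_mem [Module.Free R M] {V : Submodule R N}
    {t : M ⊗[R] N} (ht : ∀ μ : M →ₗ[R] R, leftSlice μ t ∈ V) :
    t ∈ LinearMap.range (V.subtype.lTensor M) := by
  let B := Module.Free.chooseBasis R M
  let e := TensorProduct.equivFinsuppOfBasisLeft (N := N) B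
  have hcoeff (i) : e t i ∈ V := by
    rw [TensorProduct.equivFinsuppOfBasisLeft_apply]
    exact ht (B.coord i)
  rw [← e.symm_apply_apply t, TensorProduct.equivFinsuppOfBasisLeft_symm_apply]
  exact Submodule.sum_mem _ fun i _ => ⟨B i ⊗ₜ ⟨e t i, hcoeff i⟩, rfl⟩

end Slice

section Algebra

variable {R A A' B : Type*} [CommSemiring R] [Semiring A] [Algebra R A]
  [Semiring A'] [Algebra R A'] [Semiring B] [Algebra R B]

theorem lTensor_mulLeft (b : B) (t : A ⊗[R] B) :
    (LinearMap.mulLeft R b).lTensor A t = ((1 : A) ⊗ₜ[R] b) * t := by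
  rw [← LinearMap.mulLeft_apply R, LinearMap.mulLeft_tmul, LinearMap.mulLeft_one, LinearMap.lTensor]

theorem lTensor_mulRight (b : B) (t : A ⊗[R] B) :
    (LinearMap.mulRight R b).lTensor A t = t * ((1 : A) ⊗ₜ[R] b) := by
  rw [← LinearMap.mulRight_apply R, LinearMap.mulRight_tmul, LinearMap.mulRight_one,
    LinearMap.lTensor]

theorem rTensor_mulLeft (a : A) (t : A ⊗[R] B) :
    (LinearMap.mulLeft R a).rTensor B t = (a ⊗ₜ[R] (1 : B)) * t := by
  rw [← LinearMap.mulLeft_apply R, LinearMap.mulLeft_tmul, LinearMap.mulLeft_one,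
    LinearMap.rTensor]

theorem leftSlice_one_tmul_mul (μ : A →ₗ[R] R) (b : B) (t : A ⊗[R] B) :
    leftSlice μ (((1 : A) ⊗ₜ[R] b) * t) = b * leftSlice μ t := by
  rw [← lTensor_mulLeft, leftSlice_lTensor, LinearMap.mulLeft_apply]

theorem leftSlice_mul_one_tmul (μ : A →ₗ[R] R) (b : B) (t : A ⊗[R] B) :
    leftSlice μ (t * ((1 : A) ⊗ₜ[R] b)) = leftSlice μ t * b := by
  rw [← lTensor_mulRight, leftSlice_lTensor, LinearMap.mulRight_apply]

theorem leftSlice_tmul_one_mul (μ : A →ₗ[R] R) (a : A) (t : A ⊗[R] B) :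
    leftSlice μ ((a ⊗ₜ[R] (1 : B)) * t) = leftSlice (μ ∘ₗ LinearMap.mulLeft R a) t := by
  rw [← rTensor_mulLeft, leftSlice_comp]

theorem rTensor_one_tmul_mul (f : A →ₗ[R] A') (b : B) (t : A ⊗[R] B) :
    f.rTensor B (((1 : A) ⊗ₜ[R] b) * t) = ((1 : A') ⊗ₜ[R] b) * f.rTensor B t := by
  simp only [← lTensor_mulLeft, ← LinearMap.comp_apply, LinearMap.rTensor_comp_lTensor,
    LinearMap.lTensor_comp_rTensor]

theorem rTensor_mul_one_tmul (f : A →ₗ[R] A') (b : B) (t : A ⊗[R] B) :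
    f.rTensor B (t * ((1 : A) ⊗ₜ[R] b)) = f.rTensor B t * ((1 : A') ⊗ₜ[R] b) := by
  simp only [← lTensor_mulRight, ← LinearMap.comp_apply, LinearMap.rTensor_comp_lTensor,
    LinearMap.lTensor_comp_rTensor]

variable {M : Type*} [AddCommMonoid M] [Module R M] [Module A M] [IsScalarTower R A M]

/-- The sandwich of a linear map `F : A → M` by a tensor `t = ∑ aᵢ ⊗ bᵢ`, namely the map
`y ↦ ∑ aᵢ F(bᵢ y)`. Taking `t = S(P₁) ⊗ P₂` averages `F` over the projection `P`. -/
def sandwich (F : A →ₗ[R] M) : A ⊗[R] A →ₗ[R] A →ₗ[R] M :=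
  TensorProduct.lift (Algebra.lsmul R R (A →ₗ[R] M)).toLinearMap ∘ₗ
    ((LinearMap.mul R A).compr₂ F).lTensor A

@[simp]
theorem sandwich_tmul (F : A →ₗ[R] M) (a b y : A) :
    sandwich F (a ⊗ₜ[R] b) y = a • F (b * y) := by
  simp [sandwich]

theorem sandwich_mul_one_tmul (F : A →ₗ[R] M) (t : A ⊗[R] A) (x y : A) :
    sandwich F (t * ((1 : A) ⊗ₜ[R] x)) y = sandwich F t (x * y) := by
  induction t with
  | zero => simp
  | add u v hu hv => simp only [add_mul, map_add, LinearMap.add_apply, hu, hv]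
  | tmul a b => simp [mul_assoc]

theorem sandwich_tmul_one_mul (F : A →ₗ[R] M) (t : A ⊗[R] A) (x y : A) :
    sandwich F ((x ⊗ₜ[R] (1 : A)) * t) y = x • sandwich F t y := by
  induction t with
  | zero => simp
  | add u v hu hv => simp only [mul_add, map_add, LinearMap.add_apply, smul_add, hu, hv]
  | tmul a b => simp [mul_smul]

theorem sandwich_apply_of_map_mul_eq_smul {F : A →ₗ[R] M} {V : Submodule R A} {t : A ⊗[R] A}
    (ht : t ∈ LinearMap.range (V.subtype.lTensor A)) {y : A}
    (hF : ∀ v ∈ V, F (v * y) = v • F y) :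
    sandwich F t y = LinearMap.mul' R A t • F y := by
  obtain ⟨t, rfl⟩ := ht
  induction t with
  | zero => simp
  | add u v hu hv => simp only [map_add, LinearMap.add_apply, add_smul, hu, hv]
  | tmul a v => simp [hF v v.2, mul_smul]

end Algebra

section Coalgebra

variable {R C : Type*} [CommSemiring R] [AddCommMonoid C] [Module R C] [Coalgebra R C]

/-- The right action `c ↼ μ = μ(c₁) c₂` of the dual of a coalgebra. -/
def dualTranslate (μ : C →ₗ[R] R) : C →ₗ[R] C :=
  leftSlice μ ∘ₗ Coalgebra.comul

theorem comul_dualTranslate (μ : C →ₗ[R] R) (c : C) :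
    Coalgebra.comul (R := R) (dualTranslate μ c) =
      (dualTranslate μ).rTensor C (Coalgebra.comul (R := R) c) := by
  rw [dualTranslate, LinearMap.rTensor_comp_apply, ← leftSlice_assoc, Coalgebra.coassoc_apply,
    leftSlice_lTensor, LinearMap.comp_apply]

end Coalgebra

section HopfAlgebra

open Coalgebra HopfAlgebra WithConv
open Algebra.TensorProduct (includeLeft includeRight)

variable {R A : Type*} [CommSemiring R] [Semiring A] [HopfAlgebra R A]

/-- The map `a ↦ S(a₁) ⊗ a₂`. Its value at `P` plays the role of a separability element: it
intertwines multiplication by `N_P` on its two legs, which multiply to `ε(P) = 1`. -/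
def antipodeComul : A →ₗ[R] A ⊗[R] A :=
  (antipode R).rTensor A ∘ₗ comul

theorem mul'_antipodeComul (a : A) :
    LinearMap.mul' R A (antipodeComul (R := R) a) = algebraMap R A (counit a) :=
  mul_antipode_rTensor_comul_apply a

theorem toConv_includeLeft_mul_toConv_includeRight :
    toConv (includeLeft : A →ₐ[R] A ⊗[R] A).toLinearMap *
      toConv (includeRight : A →ₐ[R] A ⊗[R] A).toLinearMap = toConv comul := by
  ext a
  rw [(ℛ R a).convMul_apply]
  simpa using (ℛ R a).eq

theorem toConv_includeLeft_antipode_mul_toConv_includeRight :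
    toConv ((includeLeft : A →ₐ[R] A ⊗[R] A).toLinearMap ∘ₗ antipode R) *
      toConv (includeRight : A →ₐ[R] A ⊗[R] A).toLinearMap = toConv antipodeComul := by
  ext a
  rw [(ℛ R a).convMul_apply]
  simp [antipodeComul, ← (ℛ R a).eq]

theorem toConv_algHom_antipode_mul_toConv_algHom {B : Type*} [Semiring B] [Algebra R B]
    (f : A →ₐ[R] B) :
    toConv (f.toLinearMap ∘ₗ antipode R) * toConv f.toLinearMap = 1 := by
  ext a
  rw [(ℛ R a).convMul_apply]
  simp [← map_mul, ← map_sum, sum_antipode_mul_eq_algebraMap_counit]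

theorem toConv_algHom_mul_toConv_algHom_antipode {B : Type*} [Semiring B] [Algebra R B]
    (f : A →ₐ[R] B) :
    toConv f.toLinearMap * toConv (f.toLinearMap ∘ₗ antipode R) = 1 := by
  ext a
  rw [(ℛ R a).convMul_apply]
  simp [← map_mul, ← map_sum, sum_mul_antipode_eq_algebraMap_counit]

-- In the convolution algebra `Δ` is the product of the two inclusions `A → A ⊗ A`, and composing
-- the left inclusion with `S` inverts it.
theorem sum_antipode_tmul_one_mul_comul {ι : Type*} {x : A} (repr : Repr R x ι) :
    ∑ i ∈ repr.index, (antipode R (repr.left i) ⊗ₜ[R] (1 : A)) * comul (repr.right i) =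
      (1 : A) ⊗ₜ[R] x := by
  have hconv : toConv ((includeLeft : A →ₐ[R] A ⊗[R] A).toLinearMap ∘ₗ antipode R) * toConv comul =
      toConv (includeRight : A →ₐ[R] A ⊗[R] A).toLinearMap := by
    rw [← toConv_includeLeft_mul_toConv_includeRight, ← mul_assoc,
      toConv_algHom_antipode_mul_toConv_algHom, one_mul]
  simpa [repr.convMul_apply] using congr($hconv x)

theorem sum_tmul_one_mul_antipodeComul {ι : Type*} {x : A} (repr : Repr R x ι) :
    ∑ i ∈ repr.index, (repr.left i ⊗ₜ[R] (1 : A)) * antipodeComul (repr.right i) =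
      (1 : A) ⊗ₜ[R] x := by
  have hconv : toConv (includeLeft : A →ₐ[R] A ⊗[R] A).toLinearMap * toConv antipodeComul =
      toConv (includeRight : A →ₐ[R] A ⊗[R] A).toLinearMap := by
    rw [← toConv_includeLeft_antipode_mul_toConv_includeRight, ← mul_assoc,
      toConv_algHom_mul_toConv_algHom_antipode, one_mul]
  simpa [repr.convMul_apply] using congr($hconv x)

theorem one_tmul_mul_comul_of_comul_mul_one_tmul {x y : A}
    (h : comul (R := R) x * ((1 : A) ⊗ₜ[R] y) = x ⊗ₜ[R] y) :
    ((1 : A) ⊗ₜ[R] x) * comul (R := R) y = (antipode R x ⊗ₜ[R] (1 : A)) * comul (R := R) y := by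
  let Φ : A ⊗[R] A →ₗ[R] A ⊗[R] A := LinearMap.mul' R (A ⊗[R] A) ∘ₗ
    TensorProduct.map ((includeLeft : A →ₐ[R] A ⊗[R] A).toLinearMap ∘ₗ antipode R) comul
  calc ((1 : A) ⊗ₜ[R] x) * comul (R := R) y = Φ (comul (R := R) x * ((1 : A) ⊗ₜ[R] y)) := by
        simp [Φ, ← (ℛ R x).eq, ← sum_antipode_tmul_one_mul_comul (ℛ R x), Finset.sum_mul, mul_assoc]
    _ = (antipode R x ⊗ₜ[R] (1 : A)) * comul (R := R) y := by simp [h, Φ]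

theorem rTensor_antipode_tmul_mul (a b : A) (t : A ⊗[R] A) :
    (antipode R).rTensor A ((a ⊗ₜ[R] b) * t) =
      ((1 : A) ⊗ₜ[R] b) * (antipode R).rTensor A t * (antipode R a ⊗ₜ[R] (1 : A)) := by
  induction t with
  | zero => simp
  | add u v hu hv => simp only [mul_add, add_mul, map_add, hu, hv]
  | tmul c d => simp [antipode_mul_antidistrib]

theorem antipodeComul_eq_sum {ι : Type*} {y : A} (repr : Repr R y ι) :
    antipodeComul (R := R) y =
      ∑ j ∈ repr.index, antipode R (repr.left j) ⊗ₜ[R] repr.right j := by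
  simp [antipodeComul, ← repr.eq]

theorem antipodeComul_mul {ι : Type*} {y : A} (repr : Repr R y ι) (z : A) :
    antipodeComul (R := R) (y * z) = ∑ j ∈ repr.index, ((1 : A) ⊗ₜ[R] repr.right j) *
      antipodeComul z * (antipode R (repr.left j) ⊗ₜ[R] (1 : A)) := by
  simp only [antipodeComul, LinearMap.comp_apply, Bialgebra.comul_mul]
  rw [← repr.eq, Finset.sum_mul, map_sum]
  exact Finset.sum_congr rfl fun j _ => rTensor_antipode_tmul_mul _ _ _

theorem antipodeComul_mul_one_tmul {ι : Type*} {x : A} (repr : Repr R x ι) (y : A) :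
    antipodeComul (R := R) y * ((1 : A) ⊗ₜ[R] x) = ∑ i ∈ repr.index,
      (repr.left i ⊗ₜ[R] (1 : A)) * antipodeComul (R := R) (y * repr.right i) := by
  let 𝓡 := ℛ R y
  have hcomm (a b : A) : ((1 : A) ⊗ₜ[R] b) * (a ⊗ₜ[R] (1 : A)) = (a ⊗ₜ[R] 1) * (1 ⊗ₜ[R] b) := by
    simp
  calc antipodeComul (R := R) y * ((1 : A) ⊗ₜ[R] x)
      = ∑ j ∈ 𝓡.index, ((1 : A) ⊗ₜ[R] 𝓡.right j) * (1 ⊗ₜ[R] x) *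
          (antipode R (𝓡.left j) ⊗ₜ[R] 1) := by
        simp [antipodeComul_eq_sum 𝓡, Finset.sum_mul]
    _ = ∑ j ∈ 𝓡.index, ∑ i ∈ repr.index, (repr.left i ⊗ₜ[R] (1 : A)) *
          ((1 ⊗ₜ[R] 𝓡.right j) * antipodeComul (repr.right i) *
            (antipode R (𝓡.left j) ⊗ₜ[R] 1)) := by
        simp only [← sum_tmul_one_mul_antipodeComul repr, Finset.mul_sum, Finset.sum_mul,
          ← mul_assoc, hcomm]
    _ = ∑ i ∈ repr.index, (repr.left i ⊗ₜ[R] (1 : A)) *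
          antipodeComul (R := R) (y * repr.right i) := by
        rw [Finset.sum_comm]
        simp only [antipodeComul_mul 𝓡, Finset.mul_sum]

theorem antipodeComul_mul_one_tmul_of_one_tmul_mul_comul {x y : A}
    (h : ((1 : A) ⊗ₜ[R] y) * comul (R := R) x = x ⊗ₜ[R] y) :
    antipodeComul (R := R) y * ((1 : A) ⊗ₜ[R] x) =
      (x ⊗ₜ[R] (1 : A)) * antipodeComul (R := R) y := by
  let Ψ : A ⊗[R] A →ₗ[R] A ⊗[R] A := LinearMap.mul' R (A ⊗[R] A) ∘ₗ
    TensorProduct.map (includeLeft : A →ₐ[R] A ⊗[R] A).toLinearMap antipodeComul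
  calc antipodeComul (R := R) y * ((1 : A) ⊗ₜ[R] x)
      = Ψ (((1 : A) ⊗ₜ[R] y) * comul (R := R) x) := by
        simp [Ψ, ← (ℛ R x).eq, antipodeComul_mul_one_tmul (ℛ R x), Finset.mul_sum]
    _ = (x ⊗ₜ[R] (1 : A)) * antipodeComul (R := R) y := by simp [h, Ψ]

end HopfAlgebra

section SelfInjective

theorem exists_sum_mul_eq_one_of_injective {R ι : Type*} [Ring R] [Module.Injective R R]
    [Fintype ι] (b : ι → R) (hb : ∀ x, (∀ i, x * b i = 0) → x = 0) :
    ∃ c : ι → R, ∑ i, b i * c i = 1 := by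
  classical
  let f : R →ₗ[R] ι → R := LinearMap.toSpanSingleton R (ι → R) b
  have hf : Function.Injective f :=
    (injective_iff_map_eq_zero f).2 fun x hx => hb x (congrFun hx)
  obtain ⟨h, hh⟩ := Module.Injective.extension_property R _ _ _ f hf LinearMap.id
  refine ⟨fun i => h fun j => if i = j then 1 else 0, ?_⟩
  calc ∑ i, b i * h (fun j => if i = j then 1 else 0) = h b := (h.pi_apply_eq_sum_univ b).symm
    _ = h (f 1) := by rw [LinearMap.toSpanSingleton_apply, one_smul]
    _ = 1 := LinearMap.congr_fun hh 1

theorem baer_of_comp_eq_id {R M M' : Type*} [Ring R] [AddCommGroup M] [Module R M]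
    [AddCommGroup M'] [Module R M'] {i : M' →ₗ[R] M} {r : M →ₗ[R] M'}
    (hri : r ∘ₗ i = LinearMap.id) (hM : Module.Baer R M) : Module.Baer R M' := by
  intro I g
  obtain ⟨g', hg'⟩ := hM I (i ∘ₗ g)
  refine ⟨r ∘ₗ g', fun x hx => ?_⟩
  rw [LinearMap.comp_apply, hg' x hx]
  exact LinearMap.congr_fun hri _

end SelfInjective

section GroupLikeProjection

open Coalgebra HopfAlgebra

/-- The left coideal `V_P` as a subspace of `A`. -/
def VPSubmodule (P : A) : Submodule k A where
  carrier := VPSet k P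
  zero_mem' := ⟨0, by simp⟩
  add_mem' := by
    rintro _ _ ⟨μ, rfl⟩ ⟨ν, rfl⟩
    exact ⟨μ + ν, by simp [TensorProduct.map_add_left]⟩
  smul_mem' := by
    rintro c _ ⟨μ, rfl⟩
    exact ⟨c • μ, by simp [TensorProduct.map_smul_left]⟩

variable {k}

theorem mem_VPSet {P x : A} : x ∈ VPSet k P ↔ ∃ μ : A →ₗ[k] k, dualTranslate μ P = x :=
  exists_congr fun _ => eq_comm

theorem dualTranslate_mem_VPSet (μ : A →ₗ[k] k) (P : A) : dualTranslate μ P ∈ VPSet k P :=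
  mem_VPSet.2 ⟨μ, rfl⟩

theorem VPSubmodule_fg (P : A) : (VPSubmodule k P).FG := by
  let 𝓡 := ℛ k P
  refine (Submodule.fg_span (𝓡.index.finite_toSet.image 𝓡.right)).of_le fun v hv => ?_
  obtain ⟨μ, rfl⟩ := mem_VPSet.1 hv
  have hsum : dualTranslate μ P = ∑ i ∈ 𝓡.index, μ (𝓡.left i) • 𝓡.right i := by
    simp [dualTranslate, ← 𝓡.eq]
  rw [hsum]
  exact Submodule.sum_smul_mem _ _ fun i hi => Submodule.subset_span ⟨i, hi, rfl⟩

theorem comul_mem_range_lTensor_VPSubmodule (P : A) :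
    comul P ∈ LinearMap.range ((VPSubmodule k P).subtype.lTensor A) :=
  mem_range_lTensor_subtype_of_leftSlice_mem fun μ => dualTranslate_mem_VPSet μ P

theorem antipodeComul_mem_range_lTensor_VPSubmodule (P : A) :
    antipodeComul P ∈ LinearMap.range ((VPSubmodule k P).subtype.lTensor A) :=
  mem_range_lTensor_subtype_of_leftSlice_mem fun μ => by
    rw [antipodeComul, LinearMap.comp_apply, ← leftSlice_comp]
    exact dualTranslate_mem_VPSet _ P

theorem dualTranslate_mem_NPSet {P x : A} (hx : x ∈ NPSet k P) (μ : A →ₗ[k] k) :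
    dualTranslate μ x ∈ NPSet k P := by
  obtain ⟨hl, hr⟩ := hx
  constructor
  · change _ * _ = _ at hl ⊢
    rw [comul_dualTranslate, ← rTensor_one_tmul_mul, hl, LinearMap.rTensor_tmul]
  · change _ * _ = _ at hr ⊢
    rw [comul_dualTranslate, ← rTensor_mul_one_tmul, hr, LinearMap.rTensor_tmul]

theorem VPSet_subset_NPSet {P : A} (hP : P ∈ NPSet k P) : VPSet k P ⊆ NPSet k P := by
  intro x hx
  obtain ⟨μ, rfl⟩ := mem_VPSet.1 hx
  exact dualTranslate_mem_NPSet hP μ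

theorem mul_mem_VPSet (hS : Function.Injective (antipode k : A →ₗ[k] A))
    {P v x : A} (hv : v ∈ VPSet k P) (hx : x ∈ NPlSet k P) : v * x ∈ VPSet k P := by
  obtain ⟨μ, rfl⟩ := mem_VPSet.1 hv
  obtain ⟨T, hT⟩ := (antipode k : A →ₗ[k] A).exists_leftInverse_of_injective
    (LinearMap.ker_eq_bot.2 hS)
  have hμ : dualTranslate μ P = leftSlice (μ ∘ₗ T) (antipodeComul P) := by
    rw [antipodeComul, LinearMap.comp_apply, ← leftSlice_comp, LinearMap.comp_assoc, hT,
      LinearMap.comp_id, dualTranslate, LinearMap.comp_apply]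
  rw [hμ, ← leftSlice_mul_one_tmul, antipodeComul_mul_one_tmul_of_one_tmul_mul_comul hx,
    leftSlice_tmul_one_mul, antipodeComul, LinearMap.comp_apply, ← leftSlice_comp]
  exact dualTranslate_mem_VPSet _ P

theorem antipode_eq_zero_of_mul_VPSet_eq_zero {P x : A} (hε : counit (R := k) P = 1)
    (hx : x ∈ NPrSet k P) (hxV : ∀ v ∈ VPSet k P, x * v = 0) : antipode k x = 0 := by
  have hmul (t : A ⊗[k] A) : LinearMap.mul' k A ((antipode k).lTensor A
      ((antipode k x ⊗ₜ[k] (1 : A)) * t)) =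
        antipode k x * LinearMap.mul' k A ((antipode k).lTensor A t) := by
    induction t with
    | zero => simp
    | add u v hu hv => simp only [map_add, mul_add, hu, hv]
    | tmul b c => simp [mul_assoc]
  have hcomul : (antipode k x ⊗ₜ[k] (1 : A)) * comul (R := k) P = 0 := by
    obtain ⟨t, ht⟩ := comul_mem_range_lTensor_VPSubmodule (k := k) P
    have hzero : LinearMap.mulLeft k x ∘ₗ (VPSubmodule k P).subtype = 0 :=
      LinearMap.ext fun v => hxV v v.2
    rw [← one_tmul_mul_comul_of_comul_mul_one_tmul hx, ← lTensor_mulLeft, ← ht,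
      ← LinearMap.lTensor_comp_apply, hzero, LinearMap.lTensor_zero, LinearMap.zero_apply]
  simpa [hcomul, hε] using (hmul (comul P)).symm

theorem IsRightGroupLikeProjection.mem_NPSet {P : A} (hP : IsRightGroupLikeProjection k P) :
    P ∈ NPSet k P :=
  ⟨hP.2.2.2, hP.2.2.1⟩

theorem IsRightGroupLikeProjection.counit_eq_one {P : A} (hP : IsRightGroupLikeProjection k P) :
    counit (R := k) P = 1 := by
  obtain ⟨hne, hidem, hr, -⟩ := hP
  have hcounit : P * P = counit (R := k) P • P := by
    have := congr(leftSlice counit $hr)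
    rwa [leftSlice_mul_one_tmul, leftSlice_tmul, leftSlice, LinearMap.comp_apply,
      rTensor_counit_comul, LinearEquiv.coe_coe, TensorProduct.lid_tmul, one_smul] at this
  refine smul_left_injective k hne ?_
  simp only [one_smul, ← hcounit, hidem]

theorem baer_of_subset_NPlSet {M : Type*} [AddCommGroup M] [Module k M] [Module A M]
    [IsScalarTower k A M] {P : A} (hε : counit (R := k) P = 1) {N : Subalgebra k A}
    (hNl : (N : Set A) ⊆ NPlSet k P) (hVN : VPSet k P ⊆ N) : Module.Baer N M := by
  intro I g
  obtain ⟨G, hG⟩ := LinearMap.exists_extend (p := I.restrictScalars k) (g.restrictScalars k)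
  obtain ⟨F, hF⟩ := LinearMap.exists_extend (p := Subalgebra.toSubmodule N) G
  have hFg (y : N) (hy : y ∈ I) : F y = g ⟨y, hy⟩ :=
    (LinearMap.congr_fun hF y).trans (LinearMap.congr_fun hG ⟨y, hy⟩)
  refine ⟨{ toFun y := sandwich F (antipodeComul P) y
            map_add' x y := by simp
            map_smul' x y := ?_ }, fun y hy => ?_⟩
  · rw [smul_eq_mul, MulMemClass.coe_mul, ← sandwich_mul_one_tmul,
      antipodeComul_mul_one_tmul_of_one_tmul_mul_comul (hNl x.2), sandwich_tmul_one_mul]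
    rfl
  · have hlin (v : A) (hv : v ∈ VPSubmodule k P) : F (v * y) = v • F y := by
      rw [hFg y hy]
      exact (hFg (⟨v, hVN hv⟩ * y) (I.mul_mem_left _ hy)).trans (g.map_smul ⟨v, hVN hv⟩ ⟨y, hy⟩)
    change sandwich F (antipodeComul P) y = _
    rw [sandwich_apply_of_map_mul_eq_smul (antipodeComul_mem_range_lTensor_VPSubmodule P) hlin,
      mul'_antipodeComul, hε, map_one, one_smul, hFg y hy]

/-- The map `a ↦ μ(S(a) P₁) P₂` from `A` to `V_P`. It is a retraction onto `N_P` when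
`μ(P₁) P₂ = 1`. -/
def coidealRetraction (P : A) (μ : A →ₗ[k] k) : A →ₗ[k] A :=
  leftSlice μ ∘ₗ LinearMap.mulRight k (comul P) ∘ₗ (TensorProduct.mk k A A).flip 1 ∘ₗ antipode k

theorem coidealRetraction_apply (P : A) (μ : A →ₗ[k] k) (a : A) :
    coidealRetraction P μ a = leftSlice μ ((antipode k a ⊗ₜ[k] (1 : A)) * comul P) :=
  rfl

theorem coidealRetraction_mem (P : A) (μ : A →ₗ[k] k) (a : A) :
    coidealRetraction P μ a ∈ VPSet k P := by
  rw [coidealRetraction_apply, leftSlice_tmul_one_mul]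
  exact dualTranslate_mem_VPSet _ P

theorem coidealRetraction_mul {P x : A} (μ : A →ₗ[k] k) (hx : x ∈ NPrSet k P) (a : A) :
    coidealRetraction P μ (x * a) = x * coidealRetraction P μ a := by
  have hsplit : antipode k (x * a) ⊗ₜ[k] (1 : A) =
      (antipode k a ⊗ₜ[k] (1 : A)) * (antipode k x ⊗ₜ[k] (1 : A)) := by
    simp [antipode_mul_antidistrib]
  have hcomm : (antipode k a ⊗ₜ[k] (1 : A)) * ((1 : A) ⊗ₜ[k] x) =
      ((1 : A) ⊗ₜ[k] x) * (antipode k a ⊗ₜ[k] (1 : A)) := by simp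
  rw [coidealRetraction_apply, hsplit, mul_assoc, ← one_tmul_mul_comul_of_comul_mul_one_tmul hx,
    ← mul_assoc, hcomm, mul_assoc, leftSlice_one_tmul_mul, coidealRetraction_apply]

theorem coidealRetraction_eq_self {P x : A} {μ : A →ₗ[k] k} (hμ : dualTranslate μ P = 1)
    (hx : x ∈ NPrSet k P) : coidealRetraction P μ x = x := by
  have hone : coidealRetraction P μ 1 = 1 := by
    rw [coidealRetraction_apply, antipode_one, ← Algebra.TensorProduct.one_def, one_mul]
    exact hμ
  simpa [hone] using coidealRetraction_mul μ hx 1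

theorem injective_of_one_mem_VPSet {P : A} (hP : IsRightGroupLikeProjection k P)
    {N : Subalgebra k A} (hN : (N : Set A) = NPSet k P) (hone : 1 ∈ VPSet k P) :
    Module.Injective N N := by
  obtain ⟨μ, hμ⟩ := mem_VPSet.1 hone
  have hVN : VPSet k P ⊆ N := hN ▸ VPSet_subset_NPSet hP.mem_NPSet
  have hNl : (N : Set A) ⊆ NPlSet k P := hN ▸ Set.inter_subset_left
  have hNr : (N : Set A) ⊆ NPrSet k P := hN ▸ Set.inter_subset_right
  let r : A →ₗ[N] N :=
    { toFun a := ⟨coidealRetraction P μ a, hVN (coidealRetraction_mem P μ a)⟩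
      map_add' a b := Subtype.ext (map_add _ a b)
      map_smul' x a := Subtype.ext (coidealRetraction_mul μ (hNr x.2) a) }
  let i : N →ₗ[N] A := LinearMap.toSpanSingleton N A 1
  have hri : r ∘ₗ i = LinearMap.id := LinearMap.ext fun x => Subtype.ext <| by
    simpa [r, i, Subalgebra.smul_def] using coidealRetraction_eq_self hμ (hNr x.2)
  exact (baer_of_comp_eq_id hri (baer_of_subset_NPlSet hP.counit_eq_one hNl hVN)).injective

theorem one_mem_VPSet_of_injective (hS : Function.Injective (antipode k : A →ₗ[k] A)) {P : A}
    (hP : IsRightGroupLikeProjection k P) {N : Subalgebra k A} (hN : (N : Set A) = NPSet k P)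
    [Module.Injective N N] : 1 ∈ VPSet k P := by
  have hVN : VPSet k P ⊆ N := hN ▸ VPSet_subset_NPSet hP.mem_NPSet
  obtain ⟨s, hs⟩ := VPSubmodule_fg (k := k) P
  have hsV (v : s) : (v : A) ∈ VPSubmodule k P := hs ▸ Submodule.subset_span v.2
  let b (v : s) : N := ⟨v, hVN (hsV v)⟩
  have hb (x : N) (hx : ∀ v, x * b v = 0) : x = 0 := by
    have hker : VPSubmodule k P ≤ LinearMap.ker (LinearMap.mulLeft k (x : A)) :=
      hs ▸ Submodule.span_le.2 fun v hv => congrArg Subtype.val (hx ⟨v, hv⟩)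
    have hSx := antipode_eq_zero_of_mul_VPSet_eq_zero hP.counit_eq_one (hN.subset x.2).2
      fun _ hv => hker hv
    exact Subtype.ext (hS (hSx.trans (map_zero _).symm))
  obtain ⟨c, hc⟩ := exists_sum_mul_eq_one_of_injective b hb
  have hone : ∑ v, (b v : A) * c v = 1 := by simpa using congrArg N.val hc
  rw [← hone]
  exact (VPSubmodule k P).sum_mem fun v _ => mul_mem_VPSet hS (hsV v) (hN.subset (c v).2).1

end GroupLikeProjection

theorem statement4_general (hS : Function.Injective (HopfAlgebra.antipode (R := k) : A →ₗ[k] A))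
    (P : A) (hP : IsRightGroupLikeProjection k P)
    (N : Subalgebra k A) (hN : (N : Set A) = NPSet k P) :
    VPSet k P = NPSet k P ↔ Module.Injective N N := by
  constructor
  · intro hVN
    refine injective_of_one_mem_VPSet hP hN ?_
    rw [hVN, ← hN]
    exact N.one_mem
  · intro _
    refine (VPSet_subset_NPSet hP.mem_NPSet).antisymm fun x hx => ?_
    simpa using mul_mem_VPSet hS (one_mem_VPSet_of_injective hS hP hN) hx.1

/-- Theorem: `V_P = N_P` if and only if `N_P` is quasi-Frobenius, i.e. injective
as a left module over itself. -/
theorem statement4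
    (hS : Function.Bijective (HopfAlgebra.antipode (R := k) : A →ₗ[k] A))
    (P : A) (hP : IsRightGroupLikeProjection k P)
    (N : Subalgebra k A) (hN : (N : Set A) = NPSet k P) :
    VPSet k P = NPSet k P ↔ Module.Injective N N :=
  statement4_general k hS.injective P hP N hN
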